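/- No transaction DAG can be produced by the ABC protocol in which a pair of confirmed transactions conflict; that is, under the assumption that at all times less than one-third of the total money M is delegated to the adversary, it is impossible that two conflicting transactions are both confirmed. -/

import Mathlib

open scoped Classical

/-- An abstract model of a message DAG produced by the ABC protocol.
Transactions, acks and outputs form the messages of the DAG; every output
carries a value and is delegated to a validator; transactions spend outputs
of previous transactions; acks are issued by validators and sign transactions;
messages reference each other acyclically. -/
structure ABC where
  /-- agents / validators -/
  Val : Type
  /-- transactions of the DAG -/
  Tx : Type
  /-- acks of the DAG -/
  Ack : Type
  /-- transaction outputs -/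
  Out : Type
  [fintypeTx : Fintype Tx]
  [fintypeAck : Fintype Ack]
  [fintypeOut : Fintype Out]
  /-- the total money in the system -/
  M : ℚ
  /-- the value (money amount) of an output -/
  value : Out → ℚ
  value_nonneg : ∀ o, 0 ≤ value o
  /-- the (unique) transaction of which `o` is an output -/
  producer : Out → Tx
  /-- `spends t o` : output `o` is an input of transaction `t` -/
  spends : Tx → Out → Prop
  /-- the validator key indicated in a transaction -/
  txValidator : Tx → Val
  /-- the validator to which an output delegates its stake -/
  delegatedTo : Out → Val
  /-- the genesis transaction -/
  genesis : Tx
  /-- the genesis has no inputs -/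
  genesis_no_inputs : ∀ o, ¬ spends genesis o
  /-- outputs of a non-genesis transaction are delegated to the validator
  indicated in the transaction (genesis outputs list the initial validators) -/
  delegated_eq : ∀ o, producer o ≠ genesis → delegatedTo o = txValidator (producer o)
  /-- the output values of a non-genesis transaction sum to its input values -/
  value_conserved : ∀ t, t ≠ genesis →
    (∑ o : Out, if producer o = t then value o else 0) =
      ∑ o : Out, if spends t o then value o else 0
  /-- the genesis output values sum to the total money `M` -/
  genesis_M : (∑ o : Out, if producer o = genesis then value o else 0) = M
  /-- the validator that issued an ack -/
  ackValidator : Ack → Val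
  /-- the set of transactions an ack signs -/
  ackSigns : Ack → Tx → Prop
  /-- hash references between messages (`Sum.inl` = transaction, `Sum.inr` = ack) -/
  ref : Tx ⊕ Ack → Tx ⊕ Ack → Prop
  /-- a transaction references the transactions producing its inputs -/
  ref_inputs : ∀ t o, spends t o → ref (Sum.inl t) (Sum.inl (producer o))
  /-- an ack references the transactions it signs -/
  ref_signs : ∀ a t, ackSigns a t → ref (Sum.inr a) (Sum.inl t)
  /-- the references form a DAG -/
  ref_acyclic : ∀ m, ¬ Relation.TransGen ref m m
  /-- which agents are honest (the remaining ones form the adversary) -/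
  honest : Val → Prop

attribute [instance] ABC.fintypeTx ABC.fintypeAck ABC.fintypeOut

namespace ABC

variable (P : ABC)

/-- messages: transactions and acks -/
abbrev Msg := P.Tx ⊕ P.Ack

/-- `past m` : the set of messages reachable from `m` by following references -/
def past (m : P.Msg) : Set P.Msg := {m' | Relation.ReflTransGen P.ref m m'}

/-- the past of a set of acks -/
def pastA (A : Finset P.Ack) : Set P.Msg := ⋃ a ∈ A, P.past (Sum.inr a)

/-- output `o` is spent in the message set `S` -/
def SpentIn (S : Set P.Msg) (o : P.Out) : Prop :=
  ∃ t, (Sum.inl t : P.Msg) ∈ S ∧ P.spends t o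

/-- `Depends t' t` : transaction `t'` depends on `t`
(reflexive-transitive closure of spending an output of) -/
def Depends : P.Tx → P.Tx → Prop :=
  Relation.ReflTransGen fun t' t => ∃ o, P.spends t' o ∧ P.producer o = t

/-- two transactions share an input -/
def SharesInput (t t' : P.Tx) : Prop := ∃ o, P.spends t o ∧ P.spends t' o

/-- conflicting transactions: two distinct transactions spending a common output
conflict, and conflicts propagate to all transactions depending on them -/
def Conflict (t₁ t₂ : P.Tx) : Prop :=
  ∃ u₁ u₂, P.Depends t₁ u₁ ∧ P.Depends t₂ u₂ ∧ u₁ ≠ u₂ ∧ P.SharesInput u₁ u₂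

/-- the stake delegated to validator `v` in the message set `S`, computed with
respect to a set `C` of (confirmed) transactions: the total value of outputs
of transactions in `C` delegated to `v` and unspent in `S` -/
noncomputable def stakeWith (C : Set P.Tx) (S : Set P.Msg) (v : P.Val) : ℚ :=
  ∑ o : P.Out,
    if P.producer o ∈ C ∧ P.delegatedTo o = v ∧ ¬ P.SpentIn S o then P.value o else 0

/-- `ConfirmedIn S t` : transaction `t` is confirmed using acks present in the
message set `S`.  The genesis is confirmed from the start; a transaction `t` is
confirmed if the transactions producing its inputs are confirmed and there is a
set of acks `A` (in `S`) whose issuing validators sign `t` and together have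
more than `2/3·M` stake delegated in `past A` (stake being computed from
transactions confirmed in `past A`, which is witnessed by the
under-approximation `C` — by nonnegativity of values this is equivalent to the
exact stake exceeding the threshold), and no other transaction in `past A`
shares an input with `t`. -/
inductive ConfirmedIn : Set P.Msg → P.Tx → Prop
  | genesis (S : Set P.Msg) : ConfirmedIn S P.genesis
  | confirm (S : Set P.Msg) (t : P.Tx) (A : Finset P.Ack) (C : Set P.Tx)
      (hacks : ∀ a ∈ A, (Sum.inr a : P.Msg) ∈ S)
      (hinp : ∀ o, P.spends t o → ConfirmedIn S (P.producer o))
      (hsign : ∀ a ∈ A, P.ackSigns a t)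
      (hC : ∀ u ∈ C, ConfirmedIn (P.pastA A) u)
      (hstake : (2 / 3 : ℚ) * P.M <
        ∑ v ∈ A.image P.ackValidator, P.stakeWith C (P.pastA A) v)
      (hnoconf : ∀ t', (Sum.inl t' : P.Msg) ∈ P.pastA A → t' ≠ t → ¬ P.SharesInput t t') :
      ConfirmedIn S t

/-- a transaction is confirmed (in the full DAG) -/
def Confirmed (t : P.Tx) : Prop := P.ConfirmedIn Set.univ t

/-- the stake delegated to validator `v` in the message set `S`
(Definition "delegated stake" of the paper) -/
noncomputable def stake (S : Set P.Msg) (v : P.Val) : ℚ :=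
  P.stakeWith {u | P.ConfirmedIn S u} S v

/-- `A` is a confirming ack set for `t` (the set `A_t` of the paper) -/
def ConfirmsVia (A : Finset P.Ack) (t : P.Tx) : Prop :=
  (∀ o, P.spends t o → P.Confirmed (P.producer o)) ∧
  (∀ a ∈ A, P.ackSigns a t) ∧
  (∃ C : Set P.Tx, (∀ u ∈ C, P.ConfirmedIn (P.pastA A) u) ∧
    (2 / 3 : ℚ) * P.M < ∑ v ∈ A.image P.ackValidator, P.stakeWith C (P.pastA A) v) ∧
  (∀ t', (Sum.inl t' : P.Msg) ∈ P.pastA A → t' ≠ t → ¬ P.SharesInput t t')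

/-- a view: a set of messages closed under references (an agent processes a
message only after having received its whole past) -/
def IsView (V : Set P.Msg) : Prop := ∀ m ∈ V, ∀ m', P.ref m m' → m' ∈ V

/-- honest validators chain their acks: any two acks of an honest validator
are related by references (each ack references the previous one) -/
def HonestChained : Prop :=
  ∀ a₁ a₂ : P.Ack, P.honest (P.ackValidator a₁) → P.ackValidator a₁ = P.ackValidator a₂ →
    Relation.ReflTransGen P.ref (Sum.inr a₁) (Sum.inr a₂) ∨
      Relation.ReflTransGen P.ref (Sum.inr a₂) (Sum.inr a₁)

/-- an honest validator signs at most one of any pair of conflicting transactions -/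
def HonestNoConflictSign : Prop :=
  ∀ a₁ a₂ t₁ t₂, P.honest (P.ackValidator a₁) → P.ackValidator a₁ = P.ackValidator a₂ →
    P.ackSigns a₁ t₁ → P.ackSigns a₂ t₂ → t₁ ≠ t₂ → ¬ P.Conflict t₁ t₂

/-- an execution order: a total ordering of the messages (given by injective
time stamps) respecting message dependence -/
structure Execution where
  time : P.Msg → ℕ
  inj : Function.Injective time
  respects : ∀ m m', P.ref m m' → time m' < time m

/-- the messages issued up to time `n` in execution `E` -/
def prefixAt (E : P.Execution) (n : ℕ) : Set P.Msg := {m | E.time m ≤ n}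

/-- the value of a transaction: the sum of the values of its outputs -/
noncomputable def txValue (t : P.Tx) : ℚ :=
  ∑ o : P.Out, if P.producer o = t then P.value o else 0

/-- the total value of the inputs of `t` that are outputs delegated to the
adversary (the quantity `m_{t,A}` of the paper) -/
noncomputable def advInputValue (t : P.Tx) : ℚ :=
  ∑ o : P.Out, if P.spends t o ∧ ¬ P.honest (P.delegatedTo o) then P.value o else 0

/-- the paper's adversary-stake accounting, at the set `S` of messages issued
so far: the genesis outputs delegated to the adversary, minus `m_{t,A}` for
every honestly delegated transaction `t` already confirmed, plus
`m_t - m_{t,A}` for every adversary-delegated transaction `t` already issued -/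
noncomputable def advStake (S : Set P.Msg) : ℚ :=
  (∑ o : P.Out,
      if P.producer o = P.genesis ∧ ¬ P.honest (P.delegatedTo o) then P.value o else 0)
    - (∑ t : P.Tx,
        if t ≠ P.genesis ∧ P.honest (P.txValidator t) ∧ P.ConfirmedIn S t
        then P.advInputValue t else 0)
    + ∑ t : P.Tx,
        if t ≠ P.genesis ∧ ¬ P.honest (P.txValidator t) ∧ (Sum.inl t : P.Msg) ∈ S
        then P.txValue t - P.advInputValue t else 0

/-- at any time, less than one-third of the total money is delegated to the
adversary -/
def AdvBounded (E : P.Execution) : Prop :=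
  ∀ n : ℕ, P.advStake (P.prefixAt E n) < P.M / 3

/-- the DAG can be produced by the protocol: honest validators chain their
acks and never sign conflicting transactions, and the adversary's stake stays
below `M/3` throughout some execution producing the DAG -/
def Producible : Prop :=
  P.HonestChained ∧ P.HonestNoConflictSign ∧ ∃ E : P.Execution, P.AdvBounded E

/-- the DAG contains two confirmed conflicting transactions -/
def HasDoubleSpend : Prop :=
  ∃ t₁ t₂, P.Confirmed t₁ ∧ P.Confirmed t₂ ∧ P.Conflict t₁ t₂

/-- the time of the latest ack of the ack set `A` -/
noncomputable def latestAck (E : P.Execution) (A : Finset P.Ack) : ℕ :=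
  A.sup fun a => E.time (Sum.inr a)

/-- `t₀` is the first transaction confirmed during the execution `E`,
exhibited by the confirming ack set `A₀` whose latest ack is minimal -/
def FirstConfirmed (E : P.Execution) (t₀ : P.Tx) (A₀ : Finset P.Ack) : Prop :=
  t₀ ≠ P.genesis ∧ P.ConfirmsVia A₀ t₀ ∧
    ∀ (t : P.Tx) (A : Finset P.Ack), t ≠ P.genesis → P.ConfirmsVia A t →
      P.latestAck E A₀ ≤ P.latestAck E A

/-- a transaction is accepted (by an honest agent) if it is confirmed in some
view -/
def Accepted (t : P.Tx) : Prop := ∃ V, P.IsView V ∧ P.ConfirmedIn V t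

/-- Agreement: a transaction confirmed in the view of some honest agent is
confirmed in the view of any honest agent having received (at least) the same
messages — the acks `A_t` are a transferable proof of confirmation, so every
honest agent will accept the same transaction — and no two conflicting
transactions are ever accepted -/
def Agreement : Prop :=
  (∀ (t : P.Tx) (V V' : Set P.Msg), P.IsView V → P.IsView V' → V ⊆ V' →
      P.ConfirmedIn V t → P.ConfirmedIn V' t) ∧
    ∀ t t', P.Conflict t t' → ¬ (P.Accepted t ∧ P.Accepted t')

/-- Validity: a transaction without any conflicting transaction is accepted by
the honest agents (it is confirmed once all messages are delivered) -/
def Validity : Prop :=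
  ∀ t : P.Tx, (∀ t', t' ≠ t → ¬ P.Conflict t t') → P.Confirmed t

/-- Honest-Termination: if a transaction without any conflicting transaction is
observed by an honest agent, then after receiving further messages the agent
accepts it -/
def HonestTermination : Prop :=
  ∀ t : P.Tx, (∀ t', t' ≠ t → ¬ P.Conflict t t') →
    ∀ V, P.IsView V → (Sum.inl t : P.Msg) ∈ V →
      ∃ V', P.IsView V' ∧ V ⊆ V' ∧ P.ConfirmedIn V' t

/-- every honest validator signs every transaction that has no conflicting
alternative -/
def HonestRespond : Prop :=
  ∀ t : P.Tx, (∀ t', t' ≠ t → ¬ P.Conflict t t') →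
    ∀ v, P.honest v → ∃ a, P.ackValidator a = v ∧ P.ackSigns a t

end ABC

namespace ABC

/-- step-indexed confirmation -/
def Conf (P : ABC) : ℕ → Set P.Msg → P.Tx → Prop
  | 0, _, t => t = P.genesis
  | k + 1, S, t => t = P.genesis ∨ ((∀ o, P.spends t o → Conf P k S (P.producer o)) ∧
      ∃ A : Finset P.Ack, (∀ a ∈ A, (Sum.inr a : P.Msg) ∈ S) ∧ (∀ a ∈ A, P.ackSigns a t) ∧
        (2 / 3 : ℚ) * P.M <
          ∑ v ∈ A.image P.ackValidator, P.stakeWith {u | Conf P k (P.pastA A) u} (P.pastA A) v ∧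
        (∀ t', (Sum.inl t' : P.Msg) ∈ P.pastA A → t' ≠ t → ¬ P.SharesInput t t'))

/-- `A` is a quorum confirming `t`, with stake computed from level `k` confirmations -/
def Quorum (P : ABC) (k : ℕ) (A : Finset P.Ack) (t : P.Tx) : Prop :=
  (∀ a ∈ A, P.ackSigns a t) ∧
  (2 / 3 : ℚ) * P.M <
    ∑ v ∈ A.image P.ackValidator, P.stakeWith {u | P.Conf k (P.pastA A) u} (P.pastA A) v ∧
  (∀ t', (Sum.inl t' : P.Msg) ∈ P.pastA A → t' ≠ t → ¬ P.SharesInput t t')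

lemma stakeWith_mono (P : ABC) {C C' : Set P.Tx} (h : C ⊆ C') (S : Set P.Msg) (v : P.Val) :
    P.stakeWith C S v ≤ P.stakeWith C' S v := by
  unfold stakeWith
  apply Finset.sum_le_sum
  intro o _
  have := P.value_nonneg o
  by_cases h1 : P.producer o ∈ C ∧ P.delegatedTo o = v ∧ ¬ P.SpentIn S o
  · rw [if_pos h1, if_pos ⟨h h1.1, h1.2⟩]
  · rw [if_neg h1]
    split_ifs <;> simp [this]

lemma conf_succ (P : ABC) (k : ℕ) : ∀ (S : Set P.Msg) (t : P.Tx),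
    P.Conf k S t → P.Conf (k + 1) S t := by
  induction k with
  | zero => intro S t h; exact Or.inl h
  | succ k ih =>
    intro S t h
    rcases h with h | ⟨hin, A, hA, hs, hst, hn⟩
    · exact Or.inl h
    · refine Or.inr ⟨fun o ho => ih _ _ (hin o ho), A, hA, hs, lt_of_lt_of_le hst ?_, hn⟩
      exact Finset.sum_le_sum fun v _ => P.stakeWith_mono (fun u hu => ih _ _ hu) _ _

lemma conf_mono (P : ABC) {k l : ℕ} (h : k ≤ l) {S : Set P.Msg} {t : P.Tx}
    (ht : P.Conf k S t) : P.Conf l S t := by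
  induction h with
  | refl => exact ht
  | step _ ih => exact P.conf_succ _ _ _ ih

lemma conf_genesis (P : ABC) (k : ℕ) (S : Set P.Msg) : P.Conf k S P.genesis := by
  cases k with
  | zero => rfl
  | succ k => exact Or.inl rfl

lemma exists_bound {ι : Type} [Finite ι] (p : ι → ℕ → Prop)
    (hmono : ∀ i k l, k ≤ l → p i k → p i l) (h : ∀ i, ∃ k, p i k) : ∃ K, ∀ i, p i K := by
  cases nonempty_fintype ι
  choose f hf using h
  exact ⟨Finset.univ.sup f, fun i => hmono i _ _ (Finset.le_sup (Finset.mem_univ i)) (hf i)⟩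

lemma confirmedIn_conf (P : ABC) {S : Set P.Msg} {t : P.Tx} (h : P.ConfirmedIn S t) :
    ∃ k, P.Conf k S t := by
  induction h with
  | genesis S => exact ⟨0, rfl⟩
  | confirm S t A C hacks hinp hsign hC hstake hnoconf ih1 ih2 =>
    obtain ⟨K1, h1⟩ := exists_bound (fun o k => P.spends t o → P.Conf k S (P.producer o))
      (fun o k l hkl h ho => P.conf_mono hkl (h ho))
      (fun o => by
        by_cases ho : P.spends t o
        · obtain ⟨k, hk⟩ := ih1 o ho; exact ⟨k, fun _ => hk⟩
        · exact ⟨0, fun h => absurd h ho⟩)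
    obtain ⟨K2, h2⟩ := exists_bound (fun u k => u ∈ C → P.Conf k (P.pastA A) u)
      (fun o k l hkl h ho => P.conf_mono hkl (h ho))
      (fun u => by
        by_cases ho : u ∈ C
        · obtain ⟨k, hk⟩ := ih2 u ho; exact ⟨k, fun _ => hk⟩
        · exact ⟨0, fun h => absurd h ho⟩)
    refine ⟨max K1 K2 + 1, Or.inr ⟨fun o ho => P.conf_mono (le_max_left _ _) (h1 o ho), A, hacks,
      hsign, lt_of_lt_of_le hstake ?_, hnoconf⟩⟩
    exact Finset.sum_le_sum fun v _ => P.stakeWith_mono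
      (fun u hu => P.conf_mono (le_max_right _ _) (h2 u hu)) _ _

lemma conf_input (P : ABC) {k : ℕ} {S : Set P.Msg} {t : P.Tx} (h : P.Conf k S t) {o : P.Out}
    (ho : P.spends t o) : P.Conf k S (P.producer o) := by
  cases k with
  | zero => obtain rfl : t = P.genesis := h; exact absurd ho (P.genesis_no_inputs o)
  | succ k =>
    rcases h with rfl | ⟨hin, _⟩
    · exact absurd ho (P.genesis_no_inputs o)
    · exact P.conf_succ _ _ _ (hin o ho)

lemma conf_quorum (P : ABC) {k : ℕ} {S : Set P.Msg} {t : P.Tx} (h : P.Conf k S t)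
    (ht : t ≠ P.genesis) :
    ∃ l < k, ∃ A, P.Quorum l A t ∧ ∀ a ∈ A, (Sum.inr a : P.Msg) ∈ S := by
  cases k with
  | zero => exact absurd h ht
  | succ k =>
    rcases h with rfl | ⟨_, A, hA, hs, hst, hn⟩
    · exact absurd rfl ht
    · exact ⟨k, Nat.lt_succ_self k, A, ⟨hs, hst, hn⟩, hA⟩

lemma M_nonneg (P : ABC) : 0 ≤ P.M := by
  rw [← P.genesis_M]
  apply Finset.sum_nonneg
  intro o _
  have := P.value_nonneg o
  split_ifs <;> simp [this]

lemma quorum_nonempty (P : ABC) {k : ℕ} {A : Finset P.Ack} {t : P.Tx} (h : P.Quorum k A t) :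
    A.Nonempty := by
  by_contra hA
  rw [Finset.not_nonempty_iff_eq_empty] at hA
  subst hA
  have h1 := h.2.1
  have := P.M_nonneg
  simp at h1
  linarith

lemma pastA_sub (P : ABC) {A B : Finset P.Ack} (h : ∀ a ∈ A, (Sum.inr a : P.Msg) ∈ P.pastA B) :
    P.pastA A ⊆ P.pastA B := by
  intro m hm
  simp only [pastA, Set.mem_iUnion, past, Set.mem_ofPred_eq] at *
  obtain ⟨a, ha, ham⟩ := hm
  obtain ⟨b, hb, hba⟩ := h a ha
  exact ⟨b, hb, hba.trans ham⟩

lemma quorum_mem (P : ABC) {k : ℕ} {A : Finset P.Ack} {t : P.Tx} (h : P.Quorum k A t) :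
    (Sum.inl t : P.Msg) ∈ P.pastA A := by
  obtain ⟨a, ha⟩ := P.quorum_nonempty h
  simp only [pastA, Set.mem_iUnion, past, Set.mem_ofPred_eq]
  exact ⟨a, ha, Relation.ReflTransGen.single (P.ref_signs _ _ (h.1 a ha))⟩

lemma time_le (P : ABC) (E : P.Execution) {m m' : P.Msg}
    (h : Relation.ReflTransGen P.ref m m') : E.time m' ≤ E.time m := by
  induction h with
  | refl => exact le_rfl
  | tail _ h ih => exact (E.respects _ _ h).le.trans ih

lemma pastA_time (P : ABC) (E : P.Execution) {A : Finset P.Ack} {m : P.Msg}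
    (h : m ∈ P.pastA A) : E.time m ≤ P.latestAck E A := by
  simp only [pastA, Set.mem_iUnion, past, Set.mem_ofPred_eq] at h
  obtain ⟨a, ha, ham⟩ := h
  exact (P.time_le E ham).trans (Finset.le_sup (f := fun a => E.time (Sum.inr a)) ha)

lemma latest_le (P : ABC) (E : P.Execution) {A : Finset P.Ack} {n : ℕ}
    (h : ∀ a ∈ A, E.time (Sum.inr a) ≤ n) : P.latestAck E A ≤ n :=
  Finset.sup_le h

/-- a transaction in the past of acks is strictly older than the latest ack -/
lemma pastA_time_tx (P : ABC) (E : P.Execution) {A : Finset P.Ack} {t : P.Tx}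
    (h : (Sum.inl t : P.Msg) ∈ P.pastA A) : E.time (Sum.inl t) < P.latestAck E A := by
  refine lt_of_le_of_ne (P.pastA_time E h) ?_
  have h0 := h
  simp only [pastA, Set.mem_iUnion, past, Set.mem_ofPred_eq] at h
  obtain ⟨a, ha, ham⟩ := h
  intro he
  have h1 : E.time (Sum.inr a) ≤ P.latestAck E A :=
    Finset.le_sup (f := fun a => E.time (Sum.inr a)) ha
  have h2 := P.time_le E ham
  have : E.time (Sum.inr a) = E.time (Sum.inl t) := by omega
  exact absurd (E.inj this) (by simp)

/-- quorums are comparable -/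
def Comp (P : ABC) (A : Finset P.Ack) (t : P.Tx) (A' : Finset P.Ack) (t' : P.Tx) : Prop :=
  (Sum.inl t : P.Msg) ∈ P.pastA A' ∨ (Sum.inl t' : P.Msg) ∈ P.pastA A

lemma Comp.symm {P : ABC} {A : Finset P.Ack} {t : P.Tx} {A' : Finset P.Ack} {t' : P.Tx}
    (h : P.Comp A t A' t') : P.Comp A' t' A t := Or.symm h

lemma comp_share (P : ABC) {k k' : ℕ} {A A' : Finset P.Ack} {t t' : P.Tx}
    (h : P.Quorum k A t) (h' : P.Quorum k' A' t') (hc : P.Comp A t A' t')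
    {o : P.Out} (ho : P.spends t o) (ho' : P.spends t' o) : t = t' := by
  by_contra hne
  rcases hc with hc | hc
  · exact h'.2.2 t hc hne ⟨o, ho', ho⟩
  · exact h.2.2 t' hc (Ne.symm hne) ⟨o, ho, ho'⟩

/-- money flow bound for a conflict-free, input-closed set of transactions -/
lemma flow (P : ABC) (F : Set P.Tx) (p : P.Out → Prop) [DecidablePred p]
    (hin : ∀ t ∈ F, ∀ o, P.spends t o → P.producer o ∈ F)
    (hcf : ∀ t ∈ F, ∀ t' ∈ F, ∀ o, P.spends t o → P.spends t' o → t = t') :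
    (∑ o : P.Out, if p o ∧ P.producer o ∈ F ∧ ∀ t ∈ F, ¬ P.spends t o then P.value o else 0) ≤
      ∑ t : P.Tx, if t ∈ F then
        ((∑ o : P.Out, if P.producer o = t ∧ p o then P.value o else 0) -
          ∑ o : P.Out, if P.spends t o ∧ p o then P.value o else 0) else 0 := by
  have e : ∀ t : P.Tx, (if t ∈ F then
        ((∑ o : P.Out, if P.producer o = t ∧ p o then P.value o else 0) -
          ∑ o : P.Out, if P.spends t o ∧ p o then P.value o else 0) else 0) =
      ∑ o : P.Out, ((if P.producer o = t then (if t ∈ F ∧ p o then P.value o else 0) else 0) -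
        (if t ∈ F ∧ P.spends t o ∧ p o then P.value o else 0)) := by
    intro t
    rw [Finset.sum_sub_distrib]
    by_cases ht : t ∈ F
    · simp [ht, ite_and]
    · simp [ht]
  simp_rw [e]
  rw [Finset.sum_comm]
  apply Finset.sum_le_sum
  intro o _
  rw [Finset.sum_sub_distrib, Finset.sum_ite_eq]
  simp only [Finset.mem_univ, if_true]
  have hv := P.value_nonneg o
  by_cases hp : p o
  swap
  · simp [hp]
  by_cases hs : ∃ t0 ∈ F, P.spends t0 o
  · obtain ⟨t0, h0, hs0⟩ := hs
    have h2 : ∀ t : P.Tx, (if t ∈ F ∧ P.spends t o ∧ p o then P.value o else 0) =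
        if t = t0 then P.value o else 0 := by
      intro t
      by_cases h : t = t0
      · subst h; simp [h0, hs0, hp]
      · rw [if_neg h, if_neg]
        rintro ⟨a, b, _⟩
        exact h (hcf _ a _ h0 _ b hs0)
    rw [Finset.sum_congr rfl fun t _ => h2 t]
    rw [if_neg (by rintro ⟨_, _, h⟩; exact h t0 h0 hs0)]
    simp [hp, hin t0 h0 o hs0]
  · push Not at hs
    have h2 : ∀ t : P.Tx, (if t ∈ F ∧ P.spends t o ∧ p o then P.value o else 0) = 0 := by
      intro t
      rw [if_neg]
      rintro ⟨a, b, _⟩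
      exact hs t a b
    rw [Finset.sum_congr rfl fun t _ => h2 t]
    by_cases hF : P.producer o ∈ F
    · rw [if_pos ⟨hp, hF, hs⟩]; simp [hF, hp]
    · simp [hF]

lemma flow_total (P : ABC) (F : Set P.Tx)
    (hin : ∀ t ∈ F, ∀ o, P.spends t o → P.producer o ∈ F)
    (hcf : ∀ t ∈ F, ∀ t' ∈ F, ∀ o, P.spends t o → P.spends t' o → t = t') :
    (∑ o : P.Out, if P.producer o ∈ F ∧ ∀ t ∈ F, ¬ P.spends t o then P.value o else 0) ≤ P.M := by
  have h := P.flow F (fun _ => True) hin hcf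
  simp only [true_and, and_true] at h
  refine h.trans ?_
  have h2 : ∀ t : P.Tx, (if t ∈ F then
        ((∑ o : P.Out, if P.producer o = t then P.value o else 0) -
          ∑ o : P.Out, if P.spends t o then P.value o else 0) else 0) ≤
        if t = P.genesis then P.M else 0 := by
    intro t
    have hM := P.M_nonneg
    by_cases ht : t = P.genesis
    · subst ht
      rw [P.genesis_M]
      have : ∀ o, ¬ P.spends P.genesis o := P.genesis_no_inputs
      simp only [this, if_false, Finset.sum_const_zero, sub_zero, if_true]
      split_ifs <;> simp [hM]
    · rw [P.value_conserved t ht]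
      simp [ht]
  refine (Finset.sum_le_sum fun t _ => h2 t).trans ?_
  simp

lemma advInput_le (P : ABC) (t : P.Tx) (ht : t ≠ P.genesis) :
    P.advInputValue t ≤ P.txValue t := by
  unfold advInputValue txValue
  rw [P.value_conserved t ht]
  apply Finset.sum_le_sum
  intro o _
  have := P.value_nonneg o
  by_cases h : P.spends t o
  · simp only [h, true_and, if_true]
    split_ifs <;> simp [this]
  · simp [h]

lemma advInput_nonneg (P : ABC) (t : P.Tx) : 0 ≤ P.advInputValue t := by
  unfold advInputValue
  apply Finset.sum_nonneg
  intro o _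
  have := P.value_nonneg o
  split_ifs <;> simp [this]

lemma flow_adv (P : ABC) (F : Set P.Tx) (S : Set P.Msg)
    (hin : ∀ t ∈ F, ∀ o, P.spends t o → P.producer o ∈ F)
    (hcf : ∀ t ∈ F, ∀ t' ∈ F, ∀ o, P.spends t o → P.spends t' o → t = t')
    (hFS : ∀ t ∈ F, t ≠ P.genesis → (Sum.inl t : P.Msg) ∈ S)
    (hSF : ∀ t, P.ConfirmedIn S t → t ∈ F) :
    (∑ o : P.Out, if ¬ P.honest (P.delegatedTo o) ∧ P.producer o ∈ F ∧ ∀ t ∈ F, ¬ P.spends t o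
      then P.value o else 0) ≤ P.advStake S := by
  refine (P.flow F (fun o => ¬ P.honest (P.delegatedTo o)) hin hcf).trans ?_
  unfold advStake
  have hg : (∑ o : P.Out,
      if P.producer o = P.genesis ∧ ¬ P.honest (P.delegatedTo o) then P.value o else 0) =
      ∑ t : P.Tx, if t = P.genesis then (∑ o : P.Out,
      if P.producer o = P.genesis ∧ ¬ P.honest (P.delegatedTo o) then P.value o else 0) else 0 := by
    simp
  rw [hg, ← Finset.sum_sub_distrib, ← Finset.sum_add_distrib]
  apply Finset.sum_le_sum
  intro t _
  by_cases ht : t = P.genesis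
  · subst ht
    have hgF := hSF _ (ConfirmedIn.genesis S)
    simp [hgF, P.genesis_no_inputs]
  · have h1 := P.advInput_le t ht
    have h0 := P.advInput_nonneg t
    change (if t ∈ F then _ - P.advInputValue t else 0) ≤ _
    by_cases hh : P.honest (P.txValidator t)
    · have e : (∑ o : P.Out, if P.producer o = t ∧ ¬ P.honest (P.delegatedTo o)
          then P.value o else 0) = 0 := by
        apply Finset.sum_eq_zero
        intro o _
        rw [if_neg]
        rintro ⟨rfl, h⟩
        rw [P.delegated_eq o ht] at h
        exact h hh
      rw [e]
      by_cases hc : P.ConfirmedIn S t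
      · simp [ht, hh, hc, hSF t hc]
      · simp only [ht, hh, hc]
        simp
        split_ifs <;> simp [h0]
    · have e : (∑ o : P.Out, if P.producer o = t ∧ ¬ P.honest (P.delegatedTo o)
          then P.value o else 0) = P.txValue t := by
        unfold txValue
        apply Finset.sum_congr rfl
        intro o _
        by_cases h : P.producer o = t
        · subst h
          rw [P.delegated_eq o ht]
          simp [hh]
        · simp [h]
      rw [e]
      by_cases hF : t ∈ F
      · simp [ht, hh, hF, hFS t hF ht]
      · simp only [ht, hh, hF]
        simp
        split_ifs <;> simp [h1]

/-- rank of a quorum: its latest ack, then the level -/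
noncomputable def rk (P : ABC) (E : P.Execution) (k : ℕ) (A : Finset P.Ack) : ℕ ×ₗ ℕ :=
  toLex (P.latestAck E A, k)

lemma rk_lt (P : ABC) (E : P.Execution) {k l : ℕ} {A B : Finset P.Ack}
    (h1 : P.latestAck E A ≤ P.latestAck E B) (h2 : k < l) : P.rk E k A < P.rk E l B := by
  unfold rk
  rw [Prod.Lex.toLex_lt_toLex]
  rcases h1.lt_or_eq with h | h
  · exact Or.inl h
  · exact Or.inr ⟨h, h2⟩

lemma rk_lt' (P : ABC) (E : P.Execution) {k l : ℕ} {A B : Finset P.Ack}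
    (h1 : P.latestAck E A < P.latestAck E B) : P.rk E k A < P.rk E l B := by
  unfold rk
  rw [Prod.Lex.toLex_lt_toLex]
  exact Or.inl h1

lemma conf_sub_quorum (P : ABC) (E : P.Execution) {k : ℕ} {B : Finset P.Ack} {t : P.Tx}
    (h : P.Conf k (P.pastA B) t) (ht : t ≠ P.genesis) :
    ∃ l A, P.Quorum l A t ∧ P.pastA A ⊆ P.pastA B ∧ P.rk E l A < P.rk E k B := by
  obtain ⟨l, hl, A, hq, hA⟩ := P.conf_quorum h ht
  refine ⟨l, A, hq, P.pastA_sub hA, P.rk_lt E (P.latest_le E fun a ha => ?_) hl⟩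
  exact P.pastA_time E (hA a ha)

/-- adversary stake in the past of a quorum is below one third -/
lemma adv_lt (P : ABC) (E : P.Execution) (hE : P.AdvBounded E) {k : ℕ} {A : Finset P.Ack}
    (hb : ∀ l B t l' B' t', P.Quorum l B t → P.Quorum l' B' t' → P.rk E l B < P.rk E k A →
      P.rk E l' B' < P.rk E k A → P.Comp B t B' t') :
    (∑ o : P.Out, if ¬ P.honest (P.delegatedTo o) ∧ P.Conf k (P.pastA A) (P.producer o) ∧
      ¬ P.SpentIn (P.pastA A) o then P.value o else 0) < P.M / 3 := by
  set T : Finset P.Tx :=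
    Finset.univ.filter fun t => t ≠ P.genesis ∧ P.Conf k (P.pastA A) t with hT
  set n : ℕ := T.sup fun t => E.time (Sum.inl t) with hn
  -- quorums inside the prefix
  have key : ∀ l B t, P.Quorum l B t → (∀ a ∈ B, (Sum.inr a : P.Msg) ∈ P.prefixAt E n) →
      P.rk E l B < P.rk E k A ∧ (Sum.inl t : P.Msg) ∈ P.pastA A := by
    intro l B t hq hB
    have hLB : P.latestAck E B ≤ n := P.latest_le E hB
    have htB := P.pastA_time_tx E (P.quorum_mem hq)
    have hne : T.Nonempty := by
      by_contra hne
      rw [Finset.not_nonempty_iff_eq_empty] at hne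
      have : n = 0 := by rw [hn, hne]; rfl
      omega
    obtain ⟨s, hs, hsn⟩ := Finset.exists_mem_eq_sup T hne (fun t => E.time (Sum.inl t))
    rw [← hn] at hsn
    have hs' := (Finset.mem_filter.1 hs).2
    obtain ⟨l', B', hq', hsub, hr⟩ := P.conf_sub_quorum E hs'.2 hs'.1
    have hsA := P.pastA_time_tx E (hsub (P.quorum_mem hq'))
    have hr1 : P.rk E l B < P.rk E k A := P.rk_lt' E (by omega)
    refine ⟨hr1, ?_⟩
    rcases hb _ _ _ _ _ _ hq hq' hr1 hr with h | h
    · exact hsub h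
    · have := P.pastA_time_tx E h
      omega
  set F : Set P.Tx := {t | P.ConfirmedIn (P.prefixAt E n) t ∨ P.Conf k (P.pastA A) t} with hF
  have hFq : ∀ t ∈ F, t ≠ P.genesis → (Sum.inl t : P.Msg) ∈ P.pastA A ∧
      (Sum.inl t : P.Msg) ∈ P.prefixAt E n ∧
      ∃ l B, P.Quorum l B t ∧ P.rk E l B < P.rk E k A := by
    rintro t (h | h) ht
    · obtain ⟨j, hj⟩ := P.confirmedIn_conf h
      obtain ⟨l, _, B, hq, hB⟩ := P.conf_quorum hj ht
      obtain ⟨h1, h2⟩ := key l B t hq hB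
      refine ⟨h2, ?_, l, B, hq, h1⟩
      have := P.pastA_time_tx E (P.quorum_mem hq)
      exact this.le.trans (P.latest_le E hB)
    · obtain ⟨l, B, hq, hsub, hr⟩ := P.conf_sub_quorum E h ht
      refine ⟨hsub (P.quorum_mem hq), ?_, l, B, hq, hr⟩
      exact Finset.le_sup (f := fun t => E.time (Sum.inl t))
        (Finset.mem_filter.2 ⟨Finset.mem_univ t, ht, h⟩)
  have hng : ∀ t o, P.spends t o → t ≠ P.genesis := by
    rintro t o h rfl
    exact P.genesis_no_inputs o h
  refine lt_of_le_of_lt ?_ (hE n)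
  refine le_trans ?_ (P.flow_adv F (P.prefixAt E n) ?_ ?_ (fun t h ht => (hFq t h ht).2.1)
    (fun t h => Or.inl h))
  · apply Finset.sum_le_sum
    intro o _
    have hv := P.value_nonneg o
    by_cases h : ¬ P.honest (P.delegatedTo o) ∧ P.Conf k (P.pastA A) (P.producer o) ∧
      ¬ P.SpentIn (P.pastA A) o
    · rw [if_pos h, if_pos]
      refine ⟨h.1, Or.inr h.2.1, fun t ht hto => h.2.2 ⟨t, ?_, hto⟩⟩
      exact (hFq t ht (hng t o hto)).1
    · rw [if_neg h]
      split_ifs <;> simp [hv]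
  · rintro t (h | h) o ho
    · left
      cases h with
      | genesis => exact absurd ho (P.genesis_no_inputs o)
      | confirm _ _ A C hacks hinp hsign hC hstake hnoconf => exact hinp o ho
    · exact Or.inr (P.conf_input h ho)
  · intro t ht t' ht' o ho ho'
    obtain ⟨_, _, l, B, hq, hr⟩ := hFq t ht (hng t o ho)
    obtain ⟨_, _, l', B', hq', hr'⟩ := hFq t' ht' (hng t' o ho')
    exact P.comp_share hq hq' (hb _ _ _ _ _ _ hq hq' hr hr') ho ho'

lemma stake_sum (P : ABC) (C : Set P.Tx) (S : Set P.Msg) (V : Finset P.Val) :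
    ∑ v ∈ V, P.stakeWith C S v = ∑ o : P.Out,
      if P.delegatedTo o ∈ V ∧ P.producer o ∈ C ∧ ¬ P.SpentIn S o then P.value o else 0 := by
  unfold stakeWith
  rw [Finset.sum_comm]
  apply Finset.sum_congr rfl
  intro o _
  have : ∀ v, (if P.producer o ∈ C ∧ P.delegatedTo o = v ∧ ¬ P.SpentIn S o then P.value o else 0) =
      if P.delegatedTo o = v then
        (if P.producer o ∈ C ∧ ¬ P.SpentIn S o then P.value o else 0) else 0 := by
    intro v
    by_cases h : P.delegatedTo o = v <;> simp [h]
  rw [Finset.sum_congr rfl fun v _ => this v, Finset.sum_ite_eq, ← ite_and]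

lemma comp_step (P : ABC) (hchain : P.HonestChained) (E : P.Execution) (hE : P.AdvBounded E)
    {k₁ k₂ : ℕ} {A₁ A₂ : Finset P.Ack} {u₁ u₂ : P.Tx}
    (hq₁ : P.Quorum k₁ A₁ u₁) (hq₂ : P.Quorum k₂ A₂ u₂)
    (hb : ∀ l B t l' B' t', P.Quorum l B t → P.Quorum l' B' t' →
      P.rk E l B < max (P.rk E k₁ A₁) (P.rk E k₂ A₂) →
      P.rk E l' B' < max (P.rk E k₁ A₁) (P.rk E k₂ A₂) → P.Comp B t B' t')
    (h₁ : ∀ l B t, P.Quorum l B t → P.rk E l B < P.rk E k₁ A₁ → P.Comp B t A₂ u₂)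
    (h₂ : ∀ l B t, P.Quorum l B t → P.rk E l B < P.rk E k₂ A₂ → P.Comp A₁ u₁ B t) :
    P.Comp A₁ u₁ A₂ u₂ := by
  by_contra hbad
  have hb1 : (Sum.inl u₁ : P.Msg) ∉ P.pastA A₂ := fun h => hbad (Or.inl h)
  have hb2 : (Sum.inl u₂ : P.Msg) ∉ P.pastA A₁ := fun h => hbad (Or.inr h)
  have hng : ∀ t o, P.spends t o → t ≠ P.genesis := by
    rintro t o h rfl
    exact P.genesis_no_inputs o h
  set F : Set P.Tx := {t | P.Conf k₁ (P.pastA A₁) t ∨ P.Conf k₂ (P.pastA A₂) t} with hF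
  have hFq : ∀ t ∈ F, t ≠ P.genesis → (Sum.inl t : P.Msg) ∈ P.pastA A₁ ∧
      (Sum.inl t : P.Msg) ∈ P.pastA A₂ ∧
      ∃ l B, P.Quorum l B t ∧ P.rk E l B < max (P.rk E k₁ A₁) (P.rk E k₂ A₂) := by
    rintro t (h | h) ht
    · obtain ⟨l, B, hq, hsub, hr⟩ := P.conf_sub_quorum E h ht
      refine ⟨hsub (P.quorum_mem hq), ?_, l, B, hq, lt_max_of_lt_left hr⟩
      rcases h₁ l B t hq hr with h | h
      · exact h
      · exact absurd (hsub h) hb2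
    · obtain ⟨l, B, hq, hsub, hr⟩ := P.conf_sub_quorum E h ht
      refine ⟨?_, hsub (P.quorum_mem hq), l, B, hq, lt_max_of_lt_right hr⟩
      rcases h₂ l B t hq hr with h | h
      · exact absurd (hsub h) hb1
      · exact h
  have htot := P.flow_total F
    (by
      rintro t (h | h) o ho
      · exact Or.inl (P.conf_input h ho)
      · exact Or.inr (P.conf_input h ho))
    (by
      intro t ht t' ht' o ho ho'
      obtain ⟨_, _, l, B, hq, hr⟩ := hFq t ht (hng t o ho)
      obtain ⟨_, _, l', B', hq', hr'⟩ := hFq t' ht' (hng t' o ho')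
      exact P.comp_share hq hq' (hb _ _ _ _ _ _ hq hq' hr hr') ho ho')
  have hadv := P.adv_lt E hE (k := k₁) (A := A₁)
    (fun l B t l' B' t' hq hq' hr hr' =>
      hb l B t l' B' t' hq hq' (lt_max_of_lt_left hr) (lt_max_of_lt_left hr'))
  have hs1 := hq₁.2.1
  have hs2 := hq₂.2.1
  obtain ⟨C₁, hC₁⟩ : ∃ C : Set P.Tx, C = {u | P.Conf k₁ (P.pastA A₁) u} := ⟨_, rfl⟩
  obtain ⟨C₂, hC₂⟩ : ∃ C : Set P.Tx, C = {u | P.Conf k₂ (P.pastA A₂) u} := ⟨_, rfl⟩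
  rw [← hC₁, stake_sum] at hs1
  rw [← hC₂, stake_sum] at hs2
  have m₁ : ∀ t, t ∈ C₁ → P.Conf k₁ (P.pastA A₁) t := by
    intro t ht; rw [hC₁] at ht; exact ht
  have m₂ : ∀ t, t ∈ C₂ → P.Conf k₂ (P.pastA A₂) t := by
    intro t ht; rw [hC₂] at ht; exact ht
  -- no common honest signer
  have hdis : ∀ v, v ∈ A₁.image P.ackValidator → v ∈ A₂.image P.ackValidator → ¬ P.honest v := by
    intro v h1 h2 hv
    obtain ⟨a₁, ha₁, rfl⟩ := Finset.mem_image.1 h1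
    obtain ⟨a₂, ha₂, he⟩ := Finset.mem_image.1 h2
    rcases hchain a₁ a₂ hv he.symm with h | h
    · apply hb2
      simp only [pastA, Set.mem_iUnion, past, Set.mem_ofPred_eq]
      exact ⟨a₁, ha₁, h.tail (P.ref_signs _ _ (hq₂.1 a₂ ha₂))⟩
    · apply hb1
      simp only [pastA, Set.mem_iUnion, past, Set.mem_ofPred_eq]
      exact ⟨a₂, ha₂, h.tail (P.ref_signs _ _ (hq₁.1 a₁ ha₁))⟩
  have hle := Finset.sum_le_sum (s := (Finset.univ : Finset P.Out))
    (f := fun o => (if P.delegatedTo o ∈ A₁.image P.ackValidator ∧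
        P.producer o ∈ C₁ ∧ ¬ P.SpentIn (P.pastA A₁) o
        then P.value o else 0) +
      (if P.delegatedTo o ∈ A₂.image P.ackValidator ∧
        P.producer o ∈ C₂ ∧ ¬ P.SpentIn (P.pastA A₂) o
        then P.value o else 0))
    (g := fun o => (if P.producer o ∈ F ∧ ∀ t ∈ F, ¬ P.spends t o then P.value o else 0) +
      (if ¬ P.honest (P.delegatedTo o) ∧ P.Conf k₁ (P.pastA A₁) (P.producer o) ∧
      ¬ P.SpentIn (P.pastA A₁) o then P.value o else 0))
    (by
      intro o _
      have hv := P.value_nonneg o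
      have n1 : ¬ P.SpentIn (P.pastA A₁) o → ∀ t ∈ F, ¬ P.spends t o :=
        fun h t ht hto => h ⟨t, (hFq t ht (hng t o hto)).1, hto⟩
      have n2 : ¬ P.SpentIn (P.pastA A₂) o → ∀ t ∈ F, ¬ P.spends t o :=
        fun h t ht hto => h ⟨t, (hFq t ht (hng t o hto)).2.1, hto⟩
      have nn : 0 ≤ (if ¬ P.honest (P.delegatedTo o) ∧ P.Conf k₁ (P.pastA A₁) (P.producer o) ∧
        ¬ P.SpentIn (P.pastA A₁) o then P.value o else 0) := by
        split_ifs <;> simp [hv]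
      have nn' : 0 ≤ (if P.producer o ∈ F ∧ ∀ t ∈ F, ¬ P.spends t o then P.value o else 0) := by
        split_ifs <;> simp [hv]
      by_cases c1 : P.delegatedTo o ∈ A₁.image P.ackValidator ∧
        P.producer o ∈ C₁ ∧ ¬ P.SpentIn (P.pastA A₁) o
      · have d : P.producer o ∈ F ∧ ∀ t ∈ F, ¬ P.spends t o := ⟨Or.inl (m₁ _ c1.2.1), n1 c1.2.2⟩
        by_cases c2 : P.delegatedTo o ∈ A₂.image P.ackValidator ∧
          P.producer o ∈ C₂ ∧ ¬ P.SpentIn (P.pastA A₂) o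
        · have e : ¬ P.honest (P.delegatedTo o) ∧ P.Conf k₁ (P.pastA A₁) (P.producer o) ∧
            ¬ P.SpentIn (P.pastA A₁) o := ⟨hdis _ c1.1 c2.1, m₁ _ c1.2.1, c1.2.2⟩
          simp only [if_pos c1, if_pos c2, if_pos d, if_pos e, le_refl]
        · simp only [if_pos c1, if_neg c2, if_pos d]
          linarith
      · by_cases c2 : P.delegatedTo o ∈ A₂.image P.ackValidator ∧
          P.producer o ∈ C₂ ∧ ¬ P.SpentIn (P.pastA A₂) o
        · have d : P.producer o ∈ F ∧ ∀ t ∈ F, ¬ P.spends t o := ⟨Or.inr (m₂ _ c2.2.1), n2 c2.2.2⟩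
          simp only [if_neg c1, if_pos c2, if_pos d]
          linarith
        · simp only [if_neg c1, if_neg c2]
          linarith)
  rw [Finset.sum_add_distrib, Finset.sum_add_distrib] at hle
  have htot' : (∑ o : P.Out,
      if P.producer o ∈ F ∧ ∀ t ∈ F, ¬ P.spends t o then P.value o else 0) ≤ P.M := by
    convert htot
  linarith

lemma lex_max_min_lt {α : Type} [LinearOrder α] {a b c : α} (h : a < b) :
    toLex (max a c, min a c) < toLex (max b c, min b c) := by
  rw [Prod.Lex.toLex_lt_toLex]
  rcases le_or_gt b c with hc | hc
  · right
    rw [max_eq_right hc, max_eq_right (h.le.trans hc), min_eq_left hc,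
      min_eq_left (h.le.trans hc)]
    exact ⟨rfl, h⟩
  · left
    simp only [max_eq_left hc.le]
    exact max_lt h hc

lemma comp_all (P : ABC) (hchain : P.HonestChained) (E : P.Execution) (hE : P.AdvBounded E)
    (r : (ℕ ×ₗ ℕ) ×ₗ (ℕ ×ₗ ℕ)) :
    ∀ (k₁ k₂ : ℕ) (A₁ A₂ : Finset P.Ack) (u₁ u₂ : P.Tx),
      P.Quorum k₁ A₁ u₁ → P.Quorum k₂ A₂ u₂ →
      toLex (max (P.rk E k₁ A₁) (P.rk E k₂ A₂), min (P.rk E k₁ A₁) (P.rk E k₂ A₂)) = r →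
      P.Comp A₁ u₁ A₂ u₂ := by
  induction r using WellFoundedLT.induction with
  | ind r ih =>
    intro k₁ k₂ A₁ A₂ u₁ u₂ hq₁ hq₂ hr
    subst hr
    refine P.comp_step hchain E hE hq₁ hq₂ ?_ ?_ ?_
    · intro l B t l' B' t' hq hq' hl hl'
      refine ih _ ?_ l l' B B' t t' hq hq' rfl
      rw [Prod.Lex.toLex_lt_toLex]
      exact Or.inl (max_lt hl hl')
    · intro l B t hq hl
      exact ih _ (lex_max_min_lt hl) l k₂ B A₂ t u₂ hq hq₂ rfl
    · intro l B t hq hl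
      refine ih _ ?_ k₁ l A₁ B u₁ t hq₁ hq rfl
      rw [max_comm, min_comm, max_comm (P.rk E k₁ A₁), min_comm (P.rk E k₁ A₁)]
      exact lex_max_min_lt hl

lemma confirmed_depends (P : ABC) {t u : P.Tx} (h : P.Depends t u) :
    P.Confirmed t → P.Confirmed u := by
  intro ht
  induction h with
  | refl => exact ht
  | tail _ h ih =>
    obtain ⟨o, ho, rfl⟩ := h
    cases ih with
    | genesis => exact absurd ho (P.genesis_no_inputs o)
    | confirm _ _ A C hacks hinp hsign hC hstake hnoconf => exact hinp o ho

end ABC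

/-- STATEMENT 8 (Theorem 1 of the paper): no transaction DAG can be produced
by the ABC protocol in which a pair of confirmed transactions conflict; that
is, in any DAG in which honest validators chain their acks and never sign
conflicting transactions, and in which (for some execution producing the DAG)
at all times less than one-third of the total money `M` is delegated to the
adversary, it is impossible that two conflicting transactions are both
confirmed. -/
theorem ABC.no_conflicting_confirmed (P : ABC)
    (hchain : P.HonestChained) (hnocs : P.HonestNoConflictSign)
    (hadv : ∃ E : P.Execution, P.AdvBounded E) :
    ∀ t₁ t₂ : P.Tx, P.Confirmed t₁ → P.Confirmed t₂ → ¬ P.Conflict t₁ t₂ := by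
  rintro t₁ t₂ h₁ h₂ ⟨u₁, u₂, d₁, d₂, hne, o, ho₁, ho₂⟩
  obtain ⟨E, hE⟩ := hadv
  have hng : ∀ t, P.spends t o → t ≠ P.genesis := by
    rintro t h rfl
    exact P.genesis_no_inputs o h
  obtain ⟨j₁, c₁⟩ := P.confirmedIn_conf (P.confirmed_depends d₁ h₁)
  obtain ⟨j₂, c₂⟩ := P.confirmedIn_conf (P.confirmed_depends d₂ h₂)
  obtain ⟨k₁, _, A₁, q₁, _⟩ := P.conf_quorum c₁ (hng _ ho₁)
  obtain ⟨k₂, _, A₂, q₂, _⟩ := P.conf_quorum c₂ (hng _ ho₂)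
  exact hne (P.comp_share q₁ q₂ (P.comp_all hchain E hE _ k₁ k₂ A₁ A₂ u₁ u₂ q₁ q₂ rfl) ho₁ ho₂)
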